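/- arXiv:2304.01840 — 7 statements merged into one kernel-verified Lean document; each statement's English description precedes it below -/
import Mathlib

section
/- Fix ν ∈ ℝ and a subset S ⊆ N such that ν̂_j^S ≤ ν for all j ∉ S and ν̂_j^S ≥ ν for all j ∈ S. Then for every initial state i ∈ N and every feasible pair (x⁰, x¹) for i, the value Σ_j R_j x¹_j + (1−β) Σ_j Q_j x⁰_j − ν Σ_j x¹_j is at most Q_i + f̂_i^S − ν g_i^S; moreover this bound is attained by the feasible pair defined by x¹_j = (e_i · H^S)_j for j ∈ S and x¹_j = 0 for j ∉ S, x⁰_j = (e_i · H^S)_j for j ∉ S and x⁰_j = 0 for j ∈ S. (This is the paper's Theorem 1: the optimal-stopping problem with terminal rewards is solved by the Gittins-index policy for the modified rewards.) -/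
open Matrix BigOperators
open scoped Classical

noncomputable section

/-- Transition matrix of the `S`-active policy: row `i` of `P` if `i ∈ S`,
the `i`-th standard unit row otherwise. -/
def PAct {N : Type*} [DecidableEq N] (P : Matrix N N ℝ) (S : Finset N) : Matrix N N ℝ :=
  fun i j => if i ∈ S then P i j else if i = j then 1 else 0

/-- Transition matrix of the `Sᶜ`-active policy. -/
def PPas {N : Type*} [DecidableEq N] (P : Matrix N N ℝ) (S : Finset N) : Matrix N N ℝ :=
  fun i j => if i ∈ S then (if i = j then 1 else 0) else P i j

/-- Basis matrix `B^S = I - β P^S`. -/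
def BMat {N : Type*} [Fintype N] [DecidableEq N] (β : ℝ) (P : Matrix N N ℝ) (S : Finset N) :
    Matrix N N ℝ := 1 - β • PAct P S

/-- Non-basic matrix `N^S = I - β P^{Sᶜ}`. -/
def NMat {N : Type*} [Fintype N] [DecidableEq N] (β : ℝ) (P : Matrix N N ℝ) (S : Finset N) :
    Matrix N N ℝ := 1 - β • PPas P S

/-- Basis inverse `H^S = (B^S)⁻¹`. -/
def HMat {N : Type*} [Fintype N] [DecidableEq N] (β : ℝ) (P : Matrix N N ℝ) (S : Finset N) :
    Matrix N N ℝ := (BMat β P S)⁻¹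

/-- Tableau matrix `A^S = N^S · H^S`. -/
def AMat {N : Type*} [Fintype N] [DecidableEq N] (β : ℝ) (P : Matrix N N ℝ) (S : Finset N) :
    Matrix N N ℝ := NMat β P S * HMat β P S

/-- Work measure `g^S = H^S · 1_S`. -/
def gWork {N : Type*} [Fintype N] [DecidableEq N] (β : ℝ) (P : Matrix N N ℝ) (S : Finset N) :
    N → ℝ := (HMat β P S).mulVec (fun j => if j ∈ S then 1 else 0)

/-- Reward measure `f^S = H^S · (R·1_S)`. -/
def fRew {N : Type*} [Fintype N] [DecidableEq N] (β : ℝ) (P : Matrix N N ℝ) (R : N → ℝ)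
    (S : Finset N) : N → ℝ := (HMat β P S).mulVec (fun j => if j ∈ S then R j else 0)

/-- Marginal work `w_i^S`. -/
def wMarg {N : Type*} [Fintype N] [DecidableEq N] (β : ℝ) (P : Matrix N N ℝ) (S : Finset N)
    (i : N) : ℝ :=
  if i ∈ S then (1 - β) * gWork β P S i
  else 1 + β * ∑ j ∈ S, P i j * gWork β P S j

/-- Marginal reward `r_i^S`. -/
def rMarg {N : Type*} [Fintype N] [DecidableEq N] (β : ℝ) (P : Matrix N N ℝ) (R : N → ℝ)
    (S : Finset N) (i : N) : ℝ :=
  if i ∈ S then (1 - β) * fRew β P R S i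
  else R i + β * ∑ j ∈ S, P i j * fRew β P R S j

/-- Marginal productivity rate `ν_i^S = r_i^S / w_i^S`. -/
def nuMarg {N : Type*} [Fintype N] [DecidableEq N] (β : ℝ) (P : Matrix N N ℝ) (R : N → ℝ)
    (S : Finset N) (i : N) : ℝ := rMarg β P R S i / wMarg β P S i

/-- Feasibility of a pair of row vectors `(x⁰, x¹)` for initial state `i`:
`x⁰, x¹ ≥ 0` and `(1-β) x⁰ + x¹ (I - β P) = e_i`. -/
def Feasible {N : Type*} [Fintype N] [DecidableEq N] (β : ℝ) (P : Matrix N N ℝ) (i : N)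
    (x0 x1 : N → ℝ) : Prop :=
  (∀ j, 0 ≤ x0 j) ∧ (∀ j, 0 ≤ x1 j) ∧
    (1 - β) • x0 + Matrix.vecMul x1 (1 - β • P) = Pi.single i 1

/-- Modified reward vector `R̂ = R - (I - βP)·Q`. -/
def Rhat {N : Type*} [Fintype N] [DecidableEq N] (β : ℝ) (P : Matrix N N ℝ) (R Q : N → ℝ) :
    N → ℝ := fun i => R i - ((1 - β • P).mulVec Q) i

/-- The bellman form of `B^S u`. -/
theorem aux_B_apply {N : Type*} [Fintype N] [DecidableEq N] (β : ℝ) (P : Matrix N N ℝ)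
    (S : Finset N) (u : N → ℝ) (j : N) :
    (BMat β P S).mulVec u j
      = if j ∈ S then u j - β * ∑ k, P j k * u k else (1 - β) * u j := by
  have h : (BMat β P S).mulVec u j = u j - β * ∑ k, PAct P S j k * u k := by
    rw [BMat, Matrix.sub_mulVec, Matrix.smul_mulVec, Matrix.one_mulVec]; rfl
  rw [h]
  by_cases hj : j ∈ S
  · simp [PAct, hj]
  · simp [PAct, hj]; ring

theorem aux_maxpr {N : Type*} [Fintype N] [DecidableEq N] [Nonempty N]
    (P : Matrix N N ℝ) (hP0 : ∀ i j, 0 ≤ P i j) (hP1 : ∀ i, ∑ j, P i j = 1)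
    (β : ℝ) (hβ0 : 0 < β) (hβ1 : β < 1) (S : Finset N) (u : N → ℝ)
    (hu : ∀ j, 0 ≤ (BMat β P S).mulVec u j) (j : N) : 0 ≤ u j := by
  obtain ⟨m, hm⟩ := Finite.exists_min u
  refine le_trans ?_ (hm j)
  have h := hu m
  rw [aux_B_apply] at h
  split_ifs at h with hS
  · have h2 : u m ≤ ∑ k, P m k * u k := by
      calc u m = ∑ k, P m k * u m := by rw [← Finset.sum_mul, hP1, one_mul]
        _ ≤ _ := Finset.sum_le_sum fun k _ => mul_le_mul_of_nonneg_left (hm k) (hP0 m k)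
    nlinarith [mul_le_mul_of_nonneg_left h2 hβ0.le]
  · exact nonneg_of_mul_nonneg_right h (by linarith)

theorem aux_unit {N : Type*} [Fintype N] [DecidableEq N] [Nonempty N]
    (P : Matrix N N ℝ) (hP0 : ∀ i j, 0 ≤ P i j) (hP1 : ∀ i, ∑ j, P i j = 1)
    (β : ℝ) (hβ0 : 0 < β) (hβ1 : β < 1) (S : Finset N) : IsUnit (BMat β P S) := by
  rw [← Matrix.mulVec_injective_iff_isUnit]
  intro a b hab
  have hab : (BMat β P S).mulVec a = (BMat β P S).mulVec b := hab
  funext j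
  have h1 := aux_maxpr P hP0 hP1 β hβ0 hβ1 S (a - b)
    (by intro k; rw [Matrix.mulVec_sub, hab]; simp) j
  have h2 := aux_maxpr P hP0 hP1 β hβ0 hβ1 S (b - a)
    (by intro k; rw [Matrix.mulVec_sub, hab]; simp) j
  simp only [Pi.sub_apply] at h1 h2
  linarith

/-- Theorem 1 of the paper: the optimal-stopping LP with terminal
rewards is solved by the Gittins-index (S-active) solution for the modified rewards. -/
theorem stmt0 {N : Type*} [Fintype N] [DecidableEq N] [Nonempty N]
    (P : Matrix N N ℝ) (hP0 : ∀ i j, 0 ≤ P i j) (hP1 : ∀ i, ∑ j, P i j = 1)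
    (β : ℝ) (hβ0 : 0 < β) (hβ1 : β < 1)
    (R Q : N → ℝ) (ν : ℝ) (S : Finset N)
    (hout : ∀ j ∉ S, nuMarg β P (Rhat β P R Q) S j ≤ ν)
    (hin : ∀ j ∈ S, ν ≤ nuMarg β P (Rhat β P R Q) S j) (i : N) :
    (∀ x0 x1 : N → ℝ, Feasible β P i x0 x1 →
      ∑ j, R j * x1 j + (1 - β) * ∑ j, Q j * x0 j - ν * ∑ j, x1 j
        ≤ Q i + fRew β P (Rhat β P R Q) S i - ν * gWork β P S i) ∧
    Feasible β P i (fun j => if j ∈ S then 0 else HMat β P S i j)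
        (fun j => if j ∈ S then HMat β P S i j else 0) ∧
    (∑ j, R j * (if j ∈ S then HMat β P S i j else 0)
      + (1 - β) * ∑ j, Q j * (if j ∈ S then 0 else HMat β P S i j)
      - ν * ∑ j, (if j ∈ S then HMat β P S i j else 0)
      = Q i + fRew β P (Rhat β P R Q) S i - ν * gWork β P S i) := by
  have hU := aux_unit P hP0 hP1 β hβ0 hβ1 S
  have hdet : IsUnit (BMat β P S).det := (Matrix.isUnit_iff_isUnit_det _).1 hU
  have hBH : BMat β P S * HMat β P S = 1 := Matrix.mul_nonsing_inv _ hdet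
  have hHB : HMat β P S * BMat β P S = 1 := Matrix.nonsing_inv_mul _ hdet
  have hb : (0:ℝ) < 1 - β := by linarith
  have hsolve : ∀ c : N → ℝ, ∀ j, (BMat β P S).mulVec ((HMat β P S).mulVec c) j = c j := by
    intro c j; rw [Matrix.mulVec_mulVec, hBH, Matrix.one_mulVec]
  have hH0 : ∀ j k, 0 ≤ HMat β P S j k := by
    intro j k
    have := aux_maxpr P hP0 hP1 β hβ0 hβ1 S ((HMat β P S).mulVec (Pi.single k 1))
      (by intro l; rw [hsolve]; by_cases h : l = k
          · subst h; simp
          · simp [h]) j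
    simpa using this
  set Rh := Rhat β P R Q with hRh
  set g := gWork β P S with hg
  set f := fRew β P Rh S with hf
  have hgB : ∀ j, (BMat β P S).mulVec g j = if j ∈ S then 1 else 0 := fun j => hsolve _ j
  have hfB : ∀ j, (BMat β P S).mulVec f j = if j ∈ S then Rh j else 0 := fun j => hsolve _ j
  have hg0 : ∀ j, 0 ≤ g j := aux_maxpr P hP0 hP1 β hβ0 hβ1 S g
    (by intro j; rw [hgB]; split_ifs <;> norm_num)
  have hgin : ∀ j ∈ S, g j = 1 + β * ∑ k, P j k * g k := by
    intro j hj; have := hgB j; rw [aux_B_apply] at this; simp only [hj, if_true] at this; linarith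
  have hfin : ∀ j ∈ S, f j = Rh j + β * ∑ k, P j k * f k := by
    intro j hj; have := hfB j; rw [aux_B_apply] at this; simp only [hj, if_true] at this; linarith
  have hgout : ∀ j ∉ S, g j = 0 := by
    intro j hj; have := hgB j; rw [aux_B_apply] at this; simp only [hj, if_false] at this
    exact (mul_eq_zero.1 this).resolve_left hb.ne'
  have hfout : ∀ j ∉ S, f j = 0 := by
    intro j hj; have := hfB j; rw [aux_B_apply] at this; simp only [hj, if_false] at this
    exact (mul_eq_zero.1 this).resolve_left hb.ne'
  have hsg : ∀ j, 0 ≤ ∑ k, P j k * g k := fun j =>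
    Finset.sum_nonneg fun k _ => mul_nonneg (hP0 j k) (hg0 k)
  have hsumS : ∀ (u : N → ℝ), (∀ j ∉ S, u j = 0) → ∀ j,
      ∑ k ∈ S, P j k * u k = ∑ k, P j k * u k := by
    intro u hu j
    exact Finset.sum_subset (Finset.subset_univ S) (fun k _ hk => by rw [hu k hk, mul_zero])
  let v : N → ℝ := fun j => f j - ν * g j
  have hPv : ∀ j, ∑ k, P j k * v k = ∑ k, P j k * f k - ν * ∑ k, P j k * g k := by
    intro j
    rw [Finset.mul_sum, ← Finset.sum_sub_distrib]
    exact Finset.sum_congr rfl fun k _ => by simp only [v]; ring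
  have hvout : ∀ j ∉ S, v j = 0 := by
    intro j hj; simp [v, hfout j hj, hgout j hj]
  have hveq : ∀ j ∈ S, v j = Rh j - ν + β * ∑ k, P j k * v k := by
    intro j hj; rw [hPv]; simp only [v]
    have h1 := hgin j hj
    have h2 := hfin j hj
    linear_combination h2 - ν * h1
  have hv0 : ∀ j, 0 ≤ v j := by
    intro j
    by_cases hj : j ∈ S
    · have h := hin j hj
      have hgp : 0 < g j := by
        rw [hgin j hj]; have := mul_nonneg hβ0.le (hsg j); linarith
      simp only [nuMarg, rMarg, wMarg, hj, if_true] at h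
      rw [le_div_iff₀ (mul_pos hb hgp)] at h
      have : 0 ≤ (1 - β) * v j := by
        simp only [v]; linarith
      exact nonneg_of_mul_nonneg_right this hb
    · rw [hvout j hj]
  have hvge : ∀ j, Rh j - ν + β * ∑ k, P j k * v k ≤ v j := by
    intro j
    by_cases hj : j ∈ S
    · exact (hveq j hj).ge
    · have h := hout j hj
      simp only [nuMarg, rMarg, wMarg, hj, if_false] at h
      rw [← hg, ← hf, hsumS g hgout, hsumS f hfout, div_le_iff₀
        (by have := mul_nonneg hβ0.le (hsg j); linarith)] at h
      rw [hvout j hj, hPv]; linarith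
  have hMv : ∀ u : N → ℝ, ∀ j, (1 - β • P).mulVec u j = u j - β * ∑ k, P j k * u k := by
    intro u j
    rw [Matrix.sub_mulVec, Matrix.smul_mulVec, Matrix.one_mulVec]; rfl
  have hRhj : ∀ j, Rh j = R j - (Q j - β * ∑ k, P j k * Q k) := by
    intro j; rw [← hMv]; rfl
  -- duality identity
  have hdual : ∀ x0 x1 : N → ℝ, (1 - β) • x0 + Matrix.vecMul x1 (1 - β • P) = Pi.single i 1 →
      ∑ j, R j * x1 j + (1 - β) * ∑ j, Q j * x0 j - ν * ∑ j, x1 j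
        = Q i + v i - (1 - β) * ∑ j, x0 j * v j
          - ∑ j, x1 j * (v j - (Rh j - ν + β * ∑ k, P j k * v k)) := by
    intro x0 x1 hx
    have h := congrArg (fun y => y ⬝ᵥ (Q + v)) hx
    simp only [add_dotProduct, smul_dotProduct, ← Matrix.dotProduct_mulVec, single_dotProduct,
      one_mul, Matrix.mulVec_add, dotProduct_add, smul_eq_mul, Pi.add_apply] at h
    simp only [dotProduct, hMv] at h
    have e1 : ∑ j, x1 j * (v j - (Rh j - ν + β * ∑ k, P j k * v k))
        = ∑ j, x1 j * (v j - β * ∑ k, P j k * v k)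
          + ∑ j, x1 j * (Q j - β * ∑ k, P j k * Q k) - ∑ j, R j * x1 j + ν * ∑ j, x1 j := by
      rw [Finset.mul_sum, ← Finset.sum_add_distrib, ← Finset.sum_sub_distrib,
        ← Finset.sum_add_distrib]
      exact Finset.sum_congr rfl fun j _ => by rw [hRhj]; ring
    have e2 : ∑ j, Q j * x0 j = ∑ j, x0 j * Q j :=
      Finset.sum_congr rfl fun j _ => mul_comm _ _
    rw [e1, e2]
    linarith
  have hfeas : Feasible β P i (fun j => if j ∈ S then 0 else HMat β P S i j)
        (fun j => if j ∈ S then HMat β P S i j else 0) := by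
    refine ⟨fun j => ?_, fun j => ?_, ?_⟩
    · dsimp only; split_ifs
      · exact le_rfl
      · exact hH0 i j
    · dsimp only; split_ifs
      · exact hH0 i j
      · exact le_rfl
    · funext k
      have h1 : (HMat β P S * BMat β P S) i k = (Pi.single i 1 : N → ℝ) k := by
        rw [hHB, Matrix.one_apply, Pi.single_apply]; simp only [eq_comm]
      rw [← h1, Matrix.mul_apply]
      simp only [Pi.add_apply, Pi.smul_apply, smul_eq_mul, Matrix.vecMul, dotProduct]
      have h2 : (1 - β) * (if k ∈ S then 0 else HMat β P S i k)
          = ∑ j, if j = k then (1 - β) * (if j ∈ S then 0 else HMat β P S i j) else 0 := by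
        simp
      rw [h2, ← Finset.sum_add_distrib]
      refine Finset.sum_congr rfl fun j _ => ?_
      by_cases hj : j ∈ S <;> by_cases hk : j = k <;>
        simp [BMat, PAct, hj, hk, Matrix.one_apply] <;> grind
  have hval : Q i + f i - ν * g i = Q i + v i := by simp only [v]; ring
  rw [hval]
  refine ⟨?_, hfeas, ?_⟩
  · rintro x0 x1 ⟨h0, h1, hx⟩
    rw [hdual x0 x1 hx]
    have a1 : 0 ≤ (1 - β) * ∑ j, x0 j * v j :=
      mul_nonneg hb.le (Finset.sum_nonneg fun j _ => mul_nonneg (h0 j) (hv0 j))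
    have a2 : 0 ≤ ∑ j, x1 j * (v j - (Rh j - ν + β * ∑ k, P j k * v k)) :=
      Finset.sum_nonneg fun j _ => mul_nonneg (h1 j) (sub_nonneg.2 (hvge j))
    linarith
  · rw [hdual _ _ hfeas.2.2]
    have a1 : ∑ j, (if j ∈ S then 0 else HMat β P S i j) * v j = 0 :=
      Finset.sum_eq_zero fun j _ => by
        by_cases hj : j ∈ S
        · simp [hj]
        · simp [hvout j hj]
    have a2 : ∑ j, (if j ∈ S then HMat β P S i j else 0)
        * (v j - (Rh j - ν + β * ∑ k, P j k * v k)) = 0 :=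
      Finset.sum_eq_zero fun j _ => by
        by_cases hj : j ∈ S
        · rw [← hveq j hj, sub_self, mul_zero]
        · simp [hj]
    rw [a1, a2]; ring
end
end

section
/- For every initial state i ∈ N and every feasible pair (x⁰, x¹) for i, Σ_j R_j x¹_j + (1−β) Σ_j Q_j x⁰_j = Q_i + Σ_j (R − (I − βP)·Q)_j x¹_j. (This is the paper's Lemma 1 in the discounted case: terminal rewards can be eliminated by replacing R with R − (I − βP)Q.) -/
open Matrix BigOperators
open scoped Classical

noncomputable section

/-- Lemma 1, discounted case: terminal rewards can be eliminated by
replacing `R` with `R - (I - βP)Q`. -/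
theorem stmt1 {N : Type*} [Fintype N] [DecidableEq N] [Nonempty N]
    (P : Matrix N N ℝ) (hP0 : ∀ i j, 0 ≤ P i j) (hP1 : ∀ i, ∑ j, P i j = 1)
    (β : ℝ) (hβ0 : 0 < β) (hβ1 : β < 1)
    (R Q : N → ℝ) (i : N) (x0 x1 : N → ℝ) (hx : Feasible β P i x0 x1) :
    ∑ j, R j * x1 j + (1 - β) * ∑ j, Q j * x0 j
      = Q i + ∑ j, Rhat β P R Q j * x1 j := by
  obtain ⟨-, -, h⟩ := hx
  have h2 := congrArg (fun v => v ⬝ᵥ Q) h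
  simp only [add_dotProduct, smul_dotProduct, single_dotProduct, one_mul,
    ← dotProduct_mulVec, smul_eq_mul] at h2
  have e1 : x0 ⬝ᵥ Q = ∑ j, Q j * x0 j := by
    simp only [dotProduct, mul_comm]
  have e2 : ∑ j, Rhat β P R Q j * x1 j
      = ∑ j, R j * x1 j - x1 ⬝ᵥ ((1 - β • P) *ᵥ Q) := by
    simp only [Rhat, sub_mul, Finset.sum_sub_distrib]
    congr 1
    exact dotProduct_comm _ _
  rw [e2, ← e1]
  linarith
end
end

section
/- Fix ν ∈ ℝ and S ⊆ N. The following are equivalent: (i) for every initial state i ∈ N and every feasible pair (x⁰, x¹) for i, Σ_j (R_j − ν) x¹_j ≤ f_i^S − ν g_i^S; (ii) ν_j^S ≤ ν for all j ∉ S and ν ≤ ν_j^S for all j ∈ S. (Proposition 4: necessary and sufficient optimality test for the S-active solution of the parametric LP, for every initial state.) -/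
open Matrix BigOperators
open scoped Classical

noncomputable section

lemma minPrinciple {N : Type*} [Fintype N] [Nonempty N] (Q : Matrix N N ℝ)
    (hQ0 : ∀ i j, 0 ≤ Q i j) (hQ1 : ∀ i, ∑ j, Q i j = 1) (β : ℝ) (hβ0 : 0 < β) (hβ1 : β < 1)
    (h : N → ℝ) (hh : ∀ i, 0 ≤ h i - β * ∑ j, Q i j * h j) (i : N) : 0 ≤ h i := by
  obtain ⟨m, hm⟩ := Finite.exists_min h
  have h1 : h m ≤ ∑ j, Q m j * h j := by
    calc h m = ∑ j, Q m j * h m := by rw [← Finset.sum_mul, hQ1, one_mul]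
      _ ≤ _ := Finset.sum_le_sum fun j _ => mul_le_mul_of_nonneg_left (hm j) (hQ0 m j)
  have h2 := hh m
  have h3 := hm i
  have : 0 ≤ (1 - β) * h m := by nlinarith
  have : 0 ≤ h m := nonneg_of_mul_nonneg_right this (by linarith)
  linarith

lemma PAct_nonneg {N : Type*} [DecidableEq N] (P : Matrix N N ℝ)
    (hP0 : ∀ i j, 0 ≤ P i j) (S : Finset N) (i j : N) : 0 ≤ PAct P S i j := by
  unfold PAct
  split_ifs <;> simp [hP0]

lemma PAct_sum {N : Type*} [Fintype N] [DecidableEq N] (P : Matrix N N ℝ)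
    (hP1 : ∀ i, ∑ j, P i j = 1) (S : Finset N) (i : N) : ∑ j, PAct P S i j = 1 := by
  unfold PAct
  by_cases h : i ∈ S <;> simp [h, hP1]

lemma BMat_mulVec {N : Type*} [Fintype N] [DecidableEq N] (β : ℝ) (P : Matrix N N ℝ)
    (S : Finset N) (h : N → ℝ) (i : N) :
    (BMat β P S).mulVec h i = h i - β * ∑ j, PAct P S i j * h j := by
  unfold BMat
  rw [Matrix.sub_mulVec, Matrix.one_mulVec, Matrix.smul_mulVec]
  rfl

lemma BMat_mul_HMat {N : Type*} [Fintype N] [DecidableEq N] [Nonempty N]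
    (P : Matrix N N ℝ) (hP0 : ∀ i j, 0 ≤ P i j) (hP1 : ∀ i, ∑ j, P i j = 1)
    (β : ℝ) (hβ0 : 0 < β) (hβ1 : β < 1) (S : Finset N) :
    BMat β P S * HMat β P S = 1 := by
  unfold HMat
  apply Matrix.mul_nonsing_inv
  rw [isUnit_iff_ne_zero]
  intro hdet
  obtain ⟨v, hv, hv0⟩ := Matrix.exists_mulVec_eq_zero_iff.mpr hdet
  apply hv
  have key : ∀ i, v i - β * ∑ j, PAct P S i j * v j = 0 := fun i => by
    rw [← BMat_mulVec, hv0]; rfl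
  funext i
  have h1 := minPrinciple _ (PAct_nonneg P hP0 S) (PAct_sum P hP1 S) β hβ0 hβ1 v
    (fun i => (key i).ge) i
  have h2 := minPrinciple _ (PAct_nonneg P hP0 S) (PAct_sum P hP1 S) β hβ0 hβ1 (-v)
    (fun i => by
      have := key i
      simp only [Pi.neg_apply, mul_neg, Finset.sum_neg_distrib]
      linarith) i
  simp only [Pi.neg_apply] at h2
  simp only [Pi.zero_apply]
  linarith

lemma HMat_eq {N : Type*} [Fintype N] [DecidableEq N] [Nonempty N]
    (P : Matrix N N ℝ) (hP0 : ∀ i j, 0 ≤ P i j) (hP1 : ∀ i, ∑ j, P i j = 1)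
    (β : ℝ) (hβ0 : 0 < β) (hβ1 : β < 1) (S : Finset N) (c : N → ℝ) (i : N) :
    (HMat β P S).mulVec c i - β * ∑ j, PAct P S i j * (HMat β P S).mulVec c j = c i := by
  rw [← BMat_mulVec, Matrix.mulVec_mulVec, BMat_mul_HMat P hP0 hP1 β hβ0 hβ1, Matrix.one_mulVec]

lemma HMat_in {N : Type*} [Fintype N] [DecidableEq N] [Nonempty N]
    (P : Matrix N N ℝ) (hP0 : ∀ i j, 0 ≤ P i j) (hP1 : ∀ i, ∑ j, P i j = 1)
    (β : ℝ) (hβ0 : 0 < β) (hβ1 : β < 1) (S : Finset N) (c : N → ℝ) (i : N) (hi : i ∈ S) :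
    (HMat β P S).mulVec c i - β * ∑ j, P i j * (HMat β P S).mulVec c j = c i := by
  have := HMat_eq P hP0 hP1 β hβ0 hβ1 S c i
  simpa only [PAct, hi, if_true] using this

lemma HMat_out {N : Type*} [Fintype N] [DecidableEq N] [Nonempty N]
    (P : Matrix N N ℝ) (hP0 : ∀ i j, 0 ≤ P i j) (hP1 : ∀ i, ∑ j, P i j = 1)
    (β : ℝ) (hβ0 : 0 < β) (hβ1 : β < 1) (S : Finset N) (c : N → ℝ) (i : N) (hi : i ∉ S)
    (hc : c i = 0) :
    (HMat β P S).mulVec c i = 0 := by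
  have := HMat_eq P hP0 hP1 β hβ0 hβ1 S c i
  simp only [PAct, hi, if_false, ite_mul, one_mul, zero_mul, Finset.sum_ite_eq,
    Finset.mem_univ, if_true, hc] at this
  have h2 : (1 - β) * (HMat β P S).mulVec c i = 0 := by linarith
  rcases mul_eq_zero.mp h2 with h | h
  · linarith
  · exact h

lemma HMat_nonneg {N : Type*} [Fintype N] [DecidableEq N] [Nonempty N]
    (P : Matrix N N ℝ) (hP0 : ∀ i j, 0 ≤ P i j) (hP1 : ∀ i, ∑ j, P i j = 1)
    (β : ℝ) (hβ0 : 0 < β) (hβ1 : β < 1) (S : Finset N) (c : N → ℝ) (hc : ∀ i, 0 ≤ c i) (i : N) :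
    0 ≤ (HMat β P S).mulVec c i := by
  apply minPrinciple _ (PAct_nonneg P hP0 S) (PAct_sum P hP1 S) β hβ0 hβ1
  intro i
  rw [HMat_eq P hP0 hP1 β hβ0 hβ1]
  exact hc i

lemma wMarg_pos {N : Type*} [Fintype N] [DecidableEq N] [Nonempty N]
    (P : Matrix N N ℝ) (hP0 : ∀ i j, 0 ≤ P i j) (hP1 : ∀ i, ∑ j, P i j = 1)
    (β : ℝ) (hβ0 : 0 < β) (hβ1 : β < 1) (S : Finset N) (i : N) : 0 < wMarg β P S i := by
  have hg : ∀ j, 0 ≤ gWork β P S j := by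
    intro j
    apply HMat_nonneg P hP0 hP1 β hβ0 hβ1
    intro k
    split_ifs <;> norm_num
  unfold wMarg
  split_ifs with hi
  · have h1 := HMat_in P hP0 hP1 β hβ0 hβ1 S (fun j => if j ∈ S then 1 else 0) i hi
    change gWork β P S i - β * ∑ j, P i j * gWork β P S j = if i ∈ S then 1 else 0 at h1
    rw [if_pos hi] at h1
    have : 0 ≤ ∑ j, P i j * gWork β P S j :=
      Finset.sum_nonneg fun j _ => mul_nonneg (hP0 i j) (hg j)
    have := mul_nonneg hβ0.le this
    apply mul_pos <;> linarith
  · have : 0 ≤ ∑ j ∈ S, P i j * gWork β P S j :=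
      Finset.sum_nonneg fun j _ => mul_nonneg (hP0 i j) (hg j)
    have := mul_nonneg hβ0.le this
    linarith

/-- Gap identity for feasible pairs. -/
lemma gap_identity {N : Type*} [Fintype N] [DecidableEq N] [Nonempty N]
    (P : Matrix N N ℝ) (hP0 : ∀ i j, 0 ≤ P i j) (hP1 : ∀ i, ∑ j, P i j = 1)
    (β : ℝ) (hβ0 : 0 < β) (hβ1 : β < 1) (R : N → ℝ) (ν : ℝ) (S : Finset N)
    (i : N) (x0 x1 : N → ℝ) (hx : Feasible β P i x0 x1) :
    fRew β P R S i - ν * gWork β P S i - ∑ j, (R j - ν) * x1 j =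
      ∑ j, (if j ∈ S then x0 j * (rMarg β P R S j - ν * wMarg β P S j)
        else - (x1 j * (rMarg β P R S j - ν * wMarg β P S j))) := by
  obtain ⟨-, -, he⟩ := hx
  set v : N → ℝ := fun k => fRew β P R S k - ν * gWork β P S k with hv
  have hf0 : ∀ k ∉ S, fRew β P R S k = 0 := fun k hk =>
    HMat_out P hP0 hP1 β hβ0 hβ1 S _ k hk (if_neg hk)
  have hg0 : ∀ k ∉ S, gWork β P S k = 0 := fun k hk =>
    HMat_out P hP0 hP1 β hβ0 hβ1 S _ k hk (if_neg hk)
  have hf1 : ∀ k ∈ S, fRew β P R S k - β * ∑ j, P k j * fRew β P R S j = R k := fun k hk => by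
    have := HMat_in P hP0 hP1 β hβ0 hβ1 S (fun j => if j ∈ S then R j else 0) k hk
    simp only [hk, if_true] at this
    exact this
  have hg1 : ∀ k ∈ S, gWork β P S k - β * ∑ j, P k j * gWork β P S j = 1 := fun k hk => by
    have := HMat_in P hP0 hP1 β hβ0 hβ1 S (fun j => if j ∈ S then 1 else 0) k hk
    simp only [hk, if_true] at this
    exact this
  have hsum : ∀ k, ∑ j, P k j * v j
      = ∑ j, P k j * fRew β P R S j - ν * ∑ j, P k j * gWork β P S j := fun k => by
    rw [Finset.mul_sum, ← Finset.sum_sub_distrib]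
    exact Finset.sum_congr rfl fun j _ => by simp only [hv]; ring
  have hvi : v i = (1 - β) * ∑ j, x0 j * v j + ∑ j, x1 j * (v j - β * ∑ k, P j k * v k) := by
    have h1 : (Pi.single i 1 : N → ℝ) ⬝ᵥ v = v i := by simp
    rw [← h1, ← he, add_dotProduct, smul_dotProduct, ← Matrix.dotProduct_mulVec,
      Matrix.sub_mulVec, Matrix.one_mulVec, Matrix.smul_mulVec]
    rfl
  change v i - _ = _
  rw [hvi, Finset.mul_sum, ← Finset.sum_add_distrib, ← Finset.sum_sub_distrib]
  apply Finset.sum_congr rfl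
  intro j _
  rw [hsum j]
  by_cases hj : j ∈ S
  · have a := hf1 j hj
    have b := hg1 j hj
    simp only [hj, if_true, rMarg, wMarg, hv]
    linear_combination x1 j * a - ν * x1 j * b
  · have a : ∑ k, P j k * fRew β P R S k = ∑ k ∈ S, P j k * fRew β P R S k := by
      symm
      apply Finset.sum_subset (Finset.subset_univ S)
      intro k _ hk
      rw [hf0 k hk, mul_zero]
    have b : ∑ k, P j k * gWork β P S k = ∑ k ∈ S, P j k * gWork β P S k := by
      symm
      apply Finset.sum_subset (Finset.subset_univ S)
      intro k _ hk
      rw [hg0 k hk, mul_zero]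
    simp only [hj, if_false, rMarg, wMarg, hv, hf0 j hj, hg0 j hj, a, b]
    ring

/-- Proposition 4: necessary and sufficient optimality test for the
S-active solution of the parametric LP, for every initial state. -/
theorem stmt3 {N : Type*} [Fintype N] [DecidableEq N] [Nonempty N]
    (P : Matrix N N ℝ) (hP0 : ∀ i j, 0 ≤ P i j) (hP1 : ∀ i, ∑ j, P i j = 1)
    (β : ℝ) (hβ0 : 0 < β) (hβ1 : β < 1)
    (R : N → ℝ) (ν : ℝ) (S : Finset N) :
    (∀ i : N, ∀ x0 x1 : N → ℝ, Feasible β P i x0 x1 →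
        ∑ j, (R j - ν) * x1 j ≤ fRew β P R S i - ν * gWork β P S i) ↔
      ((∀ j ∉ S, nuMarg β P R S j ≤ ν) ∧ (∀ j ∈ S, ν ≤ nuMarg β P R S j)) := by
  have hw := wMarg_pos P hP0 hP1 β hβ0 hβ1 S
  constructor
  · intro h
    have gap : ∀ i x0 x1, Feasible β P i x0 x1 → 0 ≤ ∑ j, (if j ∈ S then
        x0 j * (rMarg β P R S j - ν * wMarg β P S j)
        else - (x1 j * (rMarg β P R S j - ν * wMarg β P S j))) := by
      intro i x0 x1 hx
      rw [← gap_identity P hP0 hP1 β hβ0 hβ1 R ν S i x0 x1 hx]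
      linarith [h i x0 x1 hx]
    have h1β : 0 < 1 - β := by linarith
    constructor
    · intro j hj
      unfold nuMarg
      rw [div_le_iff₀ (hw j)]
      set S' := insert j S with hS'
      set x : N → ℝ := fun k => HMat β P S' j k with hxdef
      have hHcol : ∀ a b, (HMat β P S').mulVec (Pi.single b 1) a = HMat β P S' a b := by
        intro a b; simp
      have hs : ∀ b k : N, (0:ℝ) ≤ (Pi.single b 1 : N → ℝ) k := by
        intro b k
        by_cases hbk : k = b
        · subst hbk; simp
        · simp [hbk]
      have hx0 : ∀ k, 0 ≤ x k := by
        intro k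
        simp only [hxdef]
        rw [← hHcol]
        exact HMat_nonneg P hP0 hP1 β hβ0 hβ1 S' _ (hs k) j
      have hxj : 0 < x j := by
        have h1 := HMat_in P hP0 hP1 β hβ0 hβ1 S' (Pi.single j 1) j (Finset.mem_insert_self j S)
        have h2 : 0 ≤ ∑ k, P j k * (HMat β P S').mulVec (Pi.single j 1) k :=
          Finset.sum_nonneg fun k _ => mul_nonneg (hP0 j k)
            (HMat_nonneg P hP0 hP1 β hβ0 hβ1 S' _ (hs j) k)
        have h3 := mul_nonneg hβ0.le h2
        rw [Pi.single_eq_same, hHcol j j] at h1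
        simp only [hxdef]
        linarith
      have hfeas : Feasible β P j (fun k => if k ∈ S' then 0 else x k)
          (fun k => if k ∈ S' then x k else 0) := by
        refine ⟨fun k => ?_, fun k => ?_, ?_⟩
        · dsimp only; split_ifs <;> simp [hx0]
        · dsimp only; split_ifs <;> simp [hx0]
        · have hHB : HMat β P S' * BMat β P S' = 1 :=
            mul_eq_one_comm.mp (BMat_mul_HMat P hP0 hP1 β hβ0 hβ1 S')
          funext l
          have h1 : ∑ k, x k * BMat β P S' k l = (Pi.single j 1 : N → ℝ) l := by
            have : (HMat β P S' * BMat β P S') j l = (1 : Matrix N N ℝ) j l := by rw [hHB]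
            rw [Matrix.mul_apply] at this
            rw [show (Pi.single j 1 : N → ℝ) l = (1 : Matrix N N ℝ) j l by
              rw [Matrix.one_apply, Pi.single_apply]; simp only [eq_comm]]
            exact this
          rw [← h1]
          simp only [Pi.add_apply, Pi.smul_apply, smul_eq_mul, Matrix.vecMul, dotProduct]
          have h2 : (1 - β) * (if l ∈ S' then 0 else x l)
              = ∑ k, if k = l then (1 - β) * (if k ∈ S' then 0 else x k) else 0 := by simp
          rw [h2, ← Finset.sum_add_distrib]
          apply Finset.sum_congr rfl
          intro k _
          simp only [BMat, PAct, Matrix.sub_apply, Matrix.smul_apply, smul_eq_mul,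
            Matrix.one_apply]
          by_cases hk : k ∈ S' <;> simp only [hk, if_true, if_false] <;>
            by_cases hkl : k = l <;> simp only [hkl, if_true, if_false] <;> ring
      have hg := gap j _ _ hfeas
      rw [Finset.sum_eq_single j] at hg
      · simp only [hj, if_false, hS', Finset.mem_insert_self, if_true] at hg
        have : x j * (rMarg β P R S j - ν * wMarg β P S j) ≤ 0 := by linarith
        have := nonpos_of_mul_nonpos_right this hxj
        linarith
      · intro k _ hk
        by_cases hkS : k ∈ S
        · simp [hkS, hS']
        · simp [hkS, hS', hk]
      · simp
    · intro j hj
      unfold nuMarg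
      rw [le_div_iff₀ (hw j)]
      have hfeas : Feasible β P j (Pi.single j (1 - β)⁻¹) 0 := by
        refine ⟨fun k => ?_, fun k => le_rfl, ?_⟩
        · rw [Pi.single_apply]; split_ifs
          · exact inv_nonneg.mpr h1β.le
          · exact le_rfl
        · rw [Matrix.zero_vecMul, add_zero, ← Pi.single_smul, smul_eq_mul,
            mul_inv_cancel₀ h1β.ne']
      have hg := gap j _ _ hfeas
      rw [Finset.sum_eq_single j] at hg
      · rw [if_pos hj, Pi.single_eq_same] at hg
        have := nonneg_of_mul_nonneg_right hg (inv_pos.mpr h1β)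
        linarith
      · intro k _ hk
        simp [hk]
      · simp
  · rintro ⟨ha, hb⟩ i x0 x1 hx
    have hgap := gap_identity P hP0 hP1 β hβ0 hβ1 R ν S i x0 x1 hx
    have : 0 ≤ fRew β P R S i - ν * gWork β P S i - ∑ j, (R j - ν) * x1 j := by
      rw [hgap]
      apply Finset.sum_nonneg
      intro j _
      split_ifs with hj
      · have := hb j hj
        unfold nuMarg at this
        rw [le_div_iff₀ (hw j)] at this
        exact mul_nonneg (hx.1 j) (by linarith)
      · have := ha j hj
        unfold nuMarg at this
        rw [div_le_iff₀ (hw j)] at this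
        have := mul_nonneg (hx.2.1 j) (sub_nonneg.mpr this)
        linarith
    linarith
end
end

section
/- Fix S ⊆ N and an initial state i ∈ N. For every feasible pair (x⁰, x¹) for i, Σ_j x¹_j = g_i^S − Σ_{j∈S} w_j^S x⁰_j + Σ_{j∉S} w_j^S x¹_j. (Proposition 3(a): decomposition of the work measure relative to the S-active policy.) -/
open Matrix BigOperators
open scoped Classical

noncomputable section

theorem aux_det {N : Type*} [Fintype N] [DecidableEq N]
    (P : Matrix N N ℝ) (hP0 : ∀ i j, 0 ≤ P i j) (hP1 : ∀ i, ∑ j, P i j = 1)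
    (β : ℝ) (hβ0 : 0 < β) (hβ1 : β < 1) (S : Finset N) : (BMat β P S).det ≠ 0 := by
  have h0 : ∀ i j, 0 ≤ PAct P S i j := by
    intro i j
    unfold PAct
    split_ifs
    · exact hP0 i j
    · norm_num
    · norm_num
  have h1 : ∀ i, ∑ j, PAct P S i j = 1 := by
    intro i
    by_cases h : i ∈ S
    · simp [PAct, h, hP1]
    · simp [PAct, h]
  apply det_ne_zero_of_sum_row_lt_diag
  intro k
  have e : ∀ j ∈ Finset.univ.erase k, ‖BMat β P S k j‖ = β * PAct P S k j := by
    intro j hj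
    have hne : k ≠ j := (Finset.ne_of_mem_erase hj).symm
    have := mul_nonneg hβ0.le (h0 k j)
    simp only [BMat, Matrix.sub_apply, Matrix.one_apply_ne hne, Matrix.smul_apply, smul_eq_mul,
      zero_sub, norm_neg, Real.norm_eq_abs, abs_of_nonneg this]
  rw [Finset.sum_congr rfl e, ← Finset.mul_sum]
  have h2 := Finset.add_sum_erase Finset.univ (PAct P S k) (Finset.mem_univ k)
  rw [h1] at h2
  have h3 : BMat β P S k k = 1 - β * PAct P S k k := by simp [BMat]
  rw [h3]
  refine lt_of_lt_of_le ?_ (le_abs_self _)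
  have h4 : ∑ x ∈ Finset.univ.erase k, PAct P S k x = 1 - PAct P S k k := by linarith
  rw [h4]
  linarith

theorem aux_g {N : Type*} [Fintype N] [DecidableEq N]
    (P : Matrix N N ℝ) (hP0 : ∀ i j, 0 ≤ P i j) (hP1 : ∀ i, ∑ j, P i j = 1)
    (β : ℝ) (hβ0 : 0 < β) (hβ1 : β < 1) (S : Finset N) (j : N) :
    gWork β P S j - β * ∑ k, PAct P S j k * gWork β P S k = if j ∈ S then 1 else 0 := by
  have h : (BMat β P S).mulVec (gWork β P S) = fun j => if j ∈ S then 1 else 0 := by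
    unfold gWork HMat
    rw [Matrix.mulVec_mulVec, Matrix.mul_nonsing_inv _
      (isUnit_iff_ne_zero.mpr (aux_det P hP0 hP1 β hβ0 hβ1 S)), Matrix.one_mulVec]
  have h' := congrFun h j
  rw [← h']
  rw [BMat, Matrix.sub_mulVec, Matrix.smul_mulVec, Matrix.one_mulVec]
  simp [Matrix.mulVec, dotProduct]

/-- Proposition 3(a): decomposition of the work measure relative to
the S-active policy. -/
theorem stmt4 {N : Type*} [Fintype N] [DecidableEq N] [Nonempty N]
    (P : Matrix N N ℝ) (hP0 : ∀ i j, 0 ≤ P i j) (hP1 : ∀ i, ∑ j, P i j = 1)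
    (β : ℝ) (hβ0 : 0 < β) (hβ1 : β < 1)
    (S : Finset N) (i : N) (x0 x1 : N → ℝ) (hx : Feasible β P i x0 x1) :
    ∑ j, x1 j
      = gWork β P S i - ∑ j ∈ S, wMarg β P S j * x0 j
        + ∑ j ∈ Sᶜ, wMarg β P S j * x1 j := by
  have hg := aux_g P hP0 hP1 β hβ0 hβ1 S
  have hz : ∀ j, j ∉ S → gWork β P S j = 0 := by
    intro j hj
    have := hg j
    simp [PAct, hj] at this
    have h2 : (1 - β) * gWork β P S j = 0 := by linarith
    rcases mul_eq_zero.mp h2 with h | h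
    · linarith
    · exact h
  have hS : ∀ j, j ∈ S → gWork β P S j = 1 + β * ∑ k, P j k * gWork β P S k := by
    intro j hj
    have := hg j
    simp only [PAct, hj, if_true] at this
    linarith
  have hsum : ∀ j, ∑ k ∈ S, P j k * gWork β P S k = ∑ k, P j k * gWork β P S k := by
    intro j
    apply Finset.sum_subset (Finset.subset_univ S)
    intro k _ hk
    rw [hz k hk, mul_zero]
  have hf := congrArg (fun v => v ⬝ᵥ gWork β P S) hx.2.2
  simp only [add_dotProduct, ← Matrix.dotProduct_mulVec, single_one_dotProduct,
    Matrix.sub_mulVec, Matrix.one_mulVec, Matrix.smul_mulVec] at hf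
  simp only [dotProduct, Matrix.mulVec, Pi.smul_apply, Pi.sub_apply, smul_eq_mul] at hf
  rw [← hf, ← Finset.sum_add_sum_compl S x1]
  rw [← Finset.sum_add_distrib, ← Finset.sum_add_sum_compl S (fun j => _ + _)]
  have e1 : ∀ j ∈ S, x1 j = (1 - β) * x0 j * gWork β P S j
      + x1 j * (gWork β P S j - β * ∑ k, P j k * gWork β P S k) - wMarg β P S j * x0 j := by
    intro j hj
    have h := hS j hj
    have h2 : gWork β P S j - β * ∑ k, P j k * gWork β P S k = 1 := by linarith
    rw [h2]
    simp only [wMarg, hj, if_true]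
    ring
  have e2 : ∀ j ∈ Sᶜ, x1 j = (1 - β) * x0 j * gWork β P S j
      + x1 j * (gWork β P S j - β * ∑ k, P j k * gWork β P S k) + wMarg β P S j * x1 j := by
    intro j hj
    have hj' : j ∉ S := Finset.mem_compl.mp hj
    simp only [wMarg, hj', if_false, hsum, hz j hj']
    ring
  have s1 := Finset.sum_congr (rfl : S = S) e1
  have s2 := Finset.sum_congr (rfl : Sᶜ = Sᶜ) e2
  rw [Finset.sum_sub_distrib] at s1
  rw [Finset.sum_add_distrib] at s2
  linarith
end
end

section
/- Fix S ⊆ N and an initial state i ∈ N. For every feasible pair (x⁰, x¹) for i, Σ_j R_j x¹_j = f_i^S − Σ_{j∈S} r_j^S x⁰_j + Σ_{j∉S} r_j^S x¹_j. (Proposition 3(b): decomposition of the reward measure relative to the S-active policy.) -/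
open Matrix BigOperators
open scoped Classical

noncomputable section

theorem BMat_isUnit_det {N : Type*} [Fintype N] [DecidableEq N]
    (P : Matrix N N ℝ) (hP0 : ∀ i j, 0 ≤ P i j) (hP1 : ∀ i, ∑ j, P i j = 1)
    (β : ℝ) (hβ0 : 0 < β) (hβ1 : β < 1) (S : Finset N) : IsUnit (BMat β P S).det := by
  rw [isUnit_iff_ne_zero]
  apply det_ne_zero_of_sum_row_lt_diag
  intro k
  have h0 : ∀ j, 0 ≤ PAct P S k j := by
    intro j
    unfold PAct
    split_ifs <;> simp [hP0]
  have h1 : ∑ j, PAct P S k j = 1 := by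
    unfold PAct
    split_ifs with h
    · exact hP1 k
    · simp
  have h2 : ∑ j ∈ Finset.univ.erase k, ‖BMat β P S k j‖
      = ∑ j ∈ Finset.univ.erase k, β * PAct P S k j := by
    apply Finset.sum_congr rfl
    intro j hj
    have hkj : k ≠ j := fun h => by simp [h] at hj
    simp [BMat, Matrix.one_apply_ne hkj, abs_of_pos hβ0, abs_of_nonneg (h0 j)]
  rw [h2, ← Finset.mul_sum]
  have h3 := Finset.add_sum_erase Finset.univ (fun j => PAct P S k j) (Finset.mem_univ k)
  simp only [h1] at h3
  refine lt_of_lt_of_le ?_ (le_abs_self _)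
  simp only [BMat, Matrix.sub_apply, Matrix.one_apply_eq, Matrix.smul_apply, smul_eq_mul]
  have h4 : ∑ j ∈ Finset.univ.erase k, PAct P S k j = 1 - PAct P S k k := by linarith
  rw [h4]
  nlinarith

/-- Proposition 3(b): decomposition of the reward measure relative to
the S-active policy. -/
theorem stmt5 {N : Type*} [Fintype N] [DecidableEq N] [Nonempty N]
    (P : Matrix N N ℝ) (hP0 : ∀ i j, 0 ≤ P i j) (hP1 : ∀ i, ∑ j, P i j = 1)
    (β : ℝ) (hβ0 : 0 < β) (hβ1 : β < 1)
    (R : N → ℝ) (S : Finset N) (i : N) (x0 x1 : N → ℝ) (hx : Feasible β P i x0 x1) :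
    ∑ j, R j * x1 j
      = fRew β P R S i - ∑ j ∈ S, rMarg β P R S j * x0 j
        + ∑ j ∈ Sᶜ, rMarg β P R S j * x1 j := by
  have hB : (BMat β P S).mulVec (fRew β P R S) = fun j => if j ∈ S then R j else 0 := by
    unfold fRew HMat
    rw [Matrix.mulVec_mulVec, Matrix.mul_nonsing_inv _ (BMat_isUnit_det P hP0 hP1 β hβ0 hβ1 S),
      Matrix.one_mulVec]
  set f := fRew β P R S with hf
  have hBj : ∀ j, f j - β * ∑ k, PAct P S j k * f k = if j ∈ S then R j else 0 := by
    intro j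
    have h := congrFun hB j
    rw [BMat, Matrix.sub_mulVec, Matrix.one_mulVec, Matrix.smul_mulVec] at h
    simpa [Matrix.mulVec, dotProduct] using h
  have hout : ∀ j, j ∉ S → f j = 0 := by
    intro j hj
    have h := hBj j
    simp [PAct, hj] at h
    have h' : (1 - β) * f j = 0 := by linarith
    rcases mul_eq_zero.1 h' with h'' | h''
    · linarith
    · exact h''
  have hin : ∀ j, j ∈ S → f j - β * ∑ k, P j k * f k = R j := by
    intro j hj
    have h := hBj j
    simpa [PAct, hj] using h
  have hsum : ∀ j, ∑ k ∈ S, P j k * f k = ∑ k, P j k * f k := by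
    intro j
    apply Finset.sum_subset (Finset.subset_univ _)
    intro k _ hk
    simp [hout k hk]
  have hmain : (1 - β) * ∑ j, x0 j * f j + ∑ j, x1 j * (f j - β * ∑ k, P j k * f k) = f i := by
    have h := congrArg (fun v => v ⬝ᵥ f) hx.2.2
    simp only [add_dotProduct, smul_dotProduct, ← Matrix.dotProduct_mulVec, single_dotProduct,
      Matrix.sub_mulVec, Matrix.one_mulVec, Matrix.smul_mulVec, one_mul, smul_eq_mul] at h
    simpa [Matrix.mulVec, dotProduct] using h
  have e0 : ∑ j ∈ S, rMarg β P R S j * x0 j = (1 - β) * ∑ j, x0 j * f j := by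
    rw [← Finset.sum_subset (Finset.subset_univ S)
      (fun k _ hk => by simp [hout k hk] : ∀ k ∈ Finset.univ, k ∉ S → x0 k * f k = 0),
      Finset.mul_sum]
    apply Finset.sum_congr rfl
    intro j hj
    simp only [rMarg, hj, if_true, ← hf]
    ring
  rw [e0, ← hmain, ← Finset.sum_add_sum_compl S (fun j => R j * x1 j),
    ← Finset.sum_add_sum_compl S (fun j => x1 j * (f j - β * ∑ k, P j k * f k))]
  have e1 : ∑ j ∈ S, x1 j * (f j - β * ∑ k, P j k * f k) = ∑ j ∈ S, R j * x1 j := by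
    apply Finset.sum_congr rfl
    intro j hj
    rw [hin j hj, mul_comm]
  have e2 : ∑ j ∈ Sᶜ, R j * x1 j = ∑ j ∈ Sᶜ, x1 j * (f j - β * ∑ k, P j k * f k)
      + ∑ j ∈ Sᶜ, rMarg β P R S j * x1 j := by
    rw [← Finset.sum_add_distrib]
    apply Finset.sum_congr rfl
    intro j hj
    have hj' : j ∉ S := Finset.mem_compl.1 hj
    simp only [rMarg, hj', if_false, ← hf, hsum, hout j hj']
    ring
  rw [e1, e2]
  ring
end
end

section
/- Fix S ⊆ N. The submatrix I_S − β P_{SS} (rows and columns indexed by S) is invertible, and the basis inverse H^S = (B^S)⁻¹ has the block form: H^S restricted to S×S equals (I_S − β P_{SS})⁻¹; H^S restricted to S×S^c equals (β/(1−β)) (I_S − β P_{SS})⁻¹ P_{S S^c}; H^S restricted to S^c×S equals the zero matrix; and H^S restricted to S^c×S^c equals (1/(1−β)) I_{S^c}. (Equation (19) of the paper.) -/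
open Matrix BigOperators
open scoped Classical

noncomputable section

/-- Submatrix of `P` with rows and columns indexed by `S`. -/
def Psub {N : Type*} (P : Matrix N N ℝ) (S : Finset N) :
    Matrix {x // x ∈ S} {x // x ∈ S} ℝ := fun a b => P a.1 b.1

theorem isUnit_one_sub_aux {M : Type*} [Fintype M] [DecidableEq M] (Q : Matrix M M ℝ)
    (h0 : ∀ i j, 0 ≤ Q i j) (h1 : ∀ i, ∑ j, Q i j ≤ 1) (β : ℝ) (hβ0 : 0 < β) (hβ1 : β < 1) :
    IsUnit ((1 : Matrix M M ℝ) - β • Q) := by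
  rw [Matrix.isUnit_iff_isUnit_det, isUnit_iff_ne_zero]
  apply det_ne_zero_of_sum_row_lt_diag
  intro k
  have hs := h1 k
  rw [← Finset.add_sum_erase _ _ (Finset.mem_univ k)] at hs
  have e : ∑ j ∈ Finset.univ.erase k, ‖((1 : Matrix M M ℝ) - β • Q) k j‖
      = β * ∑ j ∈ Finset.univ.erase k, Q k j := by
    rw [Finset.mul_sum]
    refine Finset.sum_congr rfl fun j hj => ?_
    have hne : k ≠ j := (Finset.ne_of_mem_erase hj).symm
    simp [hne, abs_of_pos hβ0, abs_of_nonneg (h0 k j)]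
  rw [e]
  refine lt_of_lt_of_le ?_ (le_abs_self _)
  simp only [Matrix.sub_apply, Matrix.one_apply_eq, Matrix.smul_apply, smul_eq_mul]
  nlinarith [mul_le_mul_of_nonneg_left hs hβ0.le]

/-- equation (19): block form of the basis inverse `H^S`. -/
theorem stmt13 {N : Type*} [Fintype N] [DecidableEq N] [Nonempty N]
    (P : Matrix N N ℝ) (hP0 : ∀ i j, 0 ≤ P i j) (hP1 : ∀ i, ∑ j, P i j = 1)
    (β : ℝ) (hβ0 : 0 < β) (hβ1 : β < 1) (S : Finset N) :
    IsUnit ((1 : Matrix {x // x ∈ S} {x // x ∈ S} ℝ) - β • Psub P S) ∧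
    (∀ a b : {x // x ∈ S},
        HMat β P S a.1 b.1 = ((1 - β • Psub P S)⁻¹) a b) ∧
    (∀ (a : {x // x ∈ S}) (j : N), j ∉ S →
        HMat β P S a.1 j
          = (β / (1 - β)) * ∑ k : {x // x ∈ S}, ((1 - β • Psub P S)⁻¹) a k * P k.1 j) ∧
    (∀ i : N, i ∉ S → ∀ b : {x // x ∈ S}, HMat β P S i b.1 = 0) ∧
    (∀ i j : N, i ∉ S → j ∉ S →
        HMat β P S i j = if i = j then 1 / (1 - β) else 0) := by
  have hA : IsUnit ((1 : Matrix {x // x ∈ S} {x // x ∈ S} ℝ) - β • Psub P S) := by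
    refine isUnit_one_sub_aux _ (fun i j => hP0 _ _) (fun i => ?_) β hβ0 hβ1
    rw [← hP1 i.1]
    have : ∑ j, Psub P S i j = ∑ j ∈ S, P i.1 j := Finset.sum_coe_sort S (fun j => P i.1 j)
    refine this.le.trans ?_
    exact Finset.sum_le_sum_of_subset_of_nonneg (Finset.subset_univ _) (fun j _ _ => hP0 _ _)
  have hB : IsUnit (BMat β P S) := by
    refine isUnit_one_sub_aux _ (fun i j => ?_) (fun i => ?_) β hβ0 hβ1
    · unfold PAct
      split_ifs <;> simp [hP0]
    · unfold PAct
      by_cases h : i ∈ S <;> simp [h, hP1]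
  have hb : (1 - β) ≠ 0 := by linarith
  have hBH : BMat β P S * HMat β P S = 1 :=
    Matrix.mul_nonsing_inv _ ((Matrix.isUnit_iff_isUnit_det _).1 hB)
  have hAi := Matrix.nonsing_inv_mul _ ((Matrix.isUnit_iff_isUnit_det _).1 hA)
  set H := HMat β P S with hH
  -- fixed-point form of `B * H = 1`
  have key : ∀ i j, H i j - β * ∑ k, PAct P S i k * H k j = (1 : Matrix N N ℝ) i j := by
    intro i j
    rw [← hBH, BMat, Matrix.sub_mul, Matrix.one_mul, Matrix.smul_mul, Matrix.sub_apply,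
      Matrix.smul_apply, Matrix.mul_apply, smul_eq_mul]
  have hout : ∀ i j, i ∉ S → H i j = if i = j then 1 / (1 - β) else 0 := by
    intro i j hi
    have h := key i j
    simp only [PAct, hi, if_false, ite_mul, one_mul, zero_mul, Finset.sum_ite_eq,
      Finset.mem_univ, if_true, Matrix.one_apply] at h
    have h2 : (1 - β) * H i j = if i = j then 1 else 0 := by rw [← h]; ring
    split_ifs at h2 ⊢
    · field_simp
      linarith
    · exact (mul_eq_zero.1 h2).resolve_left hb
  have hin : ∀ (a : {x // x ∈ S}) (j : N),
      (((1 : Matrix {x // x ∈ S} {x // x ∈ S} ℝ) - β • Psub P S) *ᵥ (fun k => H k.1 j)) a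
        = (1 : Matrix N N ℝ) a.1 j + β * ∑ k ∈ Sᶜ, P a.1 k * H k j := by
    intro a j
    have h := key a.1 j
    simp only [PAct, a.2, if_true] at h
    rw [← Finset.sum_add_sum_compl S, ← Finset.sum_coe_sort S] at h
    rw [Matrix.sub_mulVec, Matrix.one_mulVec, Matrix.smul_mulVec, Pi.sub_apply, Pi.smul_apply,
      smul_eq_mul, ← h]
    simp only [Matrix.mulVec, dotProduct, Psub]
    ring
  have hsolve : ∀ (j : N) (a : {x // x ∈ S}), H a.1 j
      = ∑ k : {x // x ∈ S}, ((1 - β • Psub P S)⁻¹) a k *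
        ((1 : Matrix N N ℝ) k.1 j + β * ∑ l ∈ Sᶜ, P k.1 l * H l j) := by
    intro j a
    have h := congrFun (congrArg (fun v => ((1 - β • Psub P S)⁻¹) *ᵥ v)
      (funext fun a => hin a j)) a
    simp only [Matrix.mulVec_mulVec] at h
    rw [hAi, Matrix.one_mulVec] at h
    exact h
  refine ⟨hA, ?_, ?_, ?_, fun i j hi _ => hout i j hi⟩
  · intro a b
    rw [hsolve, Finset.sum_eq_single b]
    · have : ∑ l ∈ Sᶜ, P b.1 l * H l b.1 = 0 := by
        refine Finset.sum_eq_zero fun l hl => ?_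
        have hl' : l ∉ S := Finset.mem_compl.1 hl
        have hne : l ≠ b.1 := fun h => hl' (h ▸ b.2)
        rw [hout l _ hl', if_neg hne, mul_zero]
      rw [this]
      simp
    · intro k _ hk
      have : ∑ l ∈ Sᶜ, P k.1 l * H l b.1 = 0 := by
        refine Finset.sum_eq_zero fun l hl => ?_
        have hl' : l ∉ S := Finset.mem_compl.1 hl
        have hne : l ≠ b.1 := fun h => hl' (h ▸ b.2)
        rw [hout l _ hl', if_neg hne, mul_zero]
      have hne : k.1 ≠ b.1 := fun h => hk (Subtype.ext h)
      rw [this, Matrix.one_apply_ne hne]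
      simp
    · simp
  · intro a j hj
    rw [hsolve, Finset.mul_sum]
    refine Finset.sum_congr rfl fun k _ => ?_
    have hne : k.1 ≠ j := fun h => hj (h ▸ k.2)
    have : ∑ l ∈ Sᶜ, P k.1 l * H l j = P k.1 j * (1 / (1 - β)) := by
      rw [Finset.sum_eq_single j]
      · rw [hout j j hj, if_pos rfl]
      · intro l hl hlj
        rw [hout l j (Finset.mem_compl.1 hl), if_neg hlj, mul_zero]
      · intro h
        exact absurd (Finset.mem_compl.2 hj) h
    rw [this, Matrix.one_apply_ne hne]
    ring
  · intro i hi b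
    have hne : i ≠ b.1 := fun h => hi (h ▸ b.2)
    rw [hout i _ hi, if_neg hne]
end
end

section
/- Fix S ⊆ N and write H_SS := (I_S − β P_{SS})⁻¹. Then the matrix A^S = N^S H^S has the block form: A^S restricted to S×S equals (1−β) H_SS; A^S restricted to S×S^c equals β H_SS P_{S S^c}; A^S restricted to S^c×S equals −β P_{S^c S} H_SS; and A^S restricted to S^c×S^c equals (1/(1−β)) (I_{S^c} − β P_{S^c S^c} + β A^S_{S^c S} P_{S S^c}), where A^S_{S^c S} denotes the S^c×S block of A^S. (Equation (20) of the paper.) -/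
open Matrix BigOperators
open scoped Classical

noncomputable section

lemma aux_left {ι : Type*} [Fintype ι] [DecidableEq ι] (Q X : Matrix ι ι ℝ) (β : ℝ) (i j : ι) :
    ((1 - β • Q) * X) i j = X i j - β * ∑ k, Q i k * X k j := by
  rw [Matrix.sub_mul, Matrix.one_mul, Matrix.smul_mul, Matrix.sub_apply, Matrix.smul_apply,
    Matrix.mul_apply, smul_eq_mul]

lemma aux_right {ι : Type*} [Fintype ι] [DecidableEq ι] (Q X : Matrix ι ι ℝ) (β : ℝ) (i j : ι) :
    (X * (1 - β • Q)) i j = X i j - β * ∑ k, X i k * Q k j := by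
  rw [Matrix.mul_sub, Matrix.mul_one, Matrix.mul_smul, Matrix.sub_apply, Matrix.smul_apply,
    Matrix.mul_apply, smul_eq_mul]

lemma aux_unit_s14 {ι : Type*} [Fintype ι] [DecidableEq ι] (Q : Matrix ι ι ℝ)
    (h0 : ∀ i j, 0 ≤ Q i j) (h1 : ∀ i, ∑ j, Q i j ≤ 1)
    (β : ℝ) (hβ0 : 0 < β) (hβ1 : β < 1) : IsUnit (1 - β • Q).det := by
  rw [isUnit_iff_ne_zero]
  apply det_ne_zero_of_sum_row_lt_diag
  intro k
  have e : ∑ j ∈ Finset.univ.erase k, ‖(1 - β • Q) k j‖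
      = ∑ j ∈ Finset.univ.erase k, β * Q k j := by
    apply Finset.sum_congr rfl
    intro j hj
    have hjk : k ≠ j := (Finset.ne_of_mem_erase hj).symm
    simp [Matrix.one_apply_ne hjk, abs_of_pos hβ0, abs_of_nonneg (h0 k j)]
  rw [e, ← Finset.mul_sum]
  have hs : Q k k + ∑ j ∈ Finset.univ.erase k, Q k j = ∑ j, Q k j :=
    Finset.add_sum_erase _ _ (Finset.mem_univ k)
  have h := h1 k
  refine lt_of_lt_of_le ?_ (Real.le_norm_self _)
  simp only [Matrix.sub_apply, Matrix.one_apply_eq, Matrix.smul_apply, smul_eq_mul]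
  nlinarith [mul_le_mul_of_nonneg_left h hβ0.le]

/-- equation (20): block form of the tableau matrix `A^S`,
where `H_SS = (I_S - β P_SS)⁻¹`. -/
theorem stmt14 {N : Type*} [Fintype N] [DecidableEq N] [Nonempty N]
    (P : Matrix N N ℝ) (hP0 : ∀ i j, 0 ≤ P i j) (hP1 : ∀ i, ∑ j, P i j = 1)
    (β : ℝ) (hβ0 : 0 < β) (hβ1 : β < 1) (S : Finset N) :
    (∀ a b : {x // x ∈ S},
        AMat β P S a.1 b.1 = (1 - β) * ((1 - β • Psub P S)⁻¹) a b) ∧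
    (∀ (a : {x // x ∈ S}) (j : N), j ∉ S →
        AMat β P S a.1 j
          = β * ∑ k : {x // x ∈ S}, ((1 - β • Psub P S)⁻¹) a k * P k.1 j) ∧
    (∀ i : N, i ∉ S → ∀ b : {x // x ∈ S},
        AMat β P S i b.1
          = -β * ∑ k : {x // x ∈ S}, P i k.1 * ((1 - β • Psub P S)⁻¹) k b) ∧
    (∀ i j : N, i ∉ S → j ∉ S →
        AMat β P S i j
          = (1 / (1 - β)) * ((if i = j then (1:ℝ) else 0) - β * P i j
              + β * ∑ k ∈ S, AMat β P S i k * P k j)) := by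
  have hB : IsUnit (BMat β P S).det := by
    refine aux_unit_s14 (PAct P S) ?_ ?_ β hβ0 hβ1
    · intro i j
      unfold PAct
      split_ifs <;> simp [hP0]
    · intro i
      by_cases hi : i ∈ S <;> simp [PAct, hi, hP1]
  have hM : IsUnit (1 - β • Psub P S).det := by
    refine aux_unit_s14 (Psub P S) (fun i j => hP0 _ _) ?_ β hβ0 hβ1
    intro i
    rw [← hP1 i.1]
    calc ∑ j, Psub P S i j = ∑ j ∈ S, P i.1 j := Finset.sum_coe_sort S (fun j => P i.1 j)
      _ ≤ _ := Finset.sum_le_sum_of_subset_of_nonneg (Finset.subset_univ _)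
        (fun j _ _ => hP0 _ _)
  have hβ : (1 - β) ≠ 0 := by linarith
  have hBH : BMat β P S * HMat β P S = 1 := Matrix.mul_nonsing_inv _ hB
  have hAB : AMat β P S * BMat β P S = NMat β P S := by
    unfold AMat HMat
    rw [Matrix.mul_assoc, Matrix.nonsing_inv_mul _ hB, Matrix.mul_one]
  have hBE : ∀ i j, HMat β P S i j - β * ∑ k, PAct P S i k * HMat β P S k j
      = (1 : Matrix N N ℝ) i j := by
    intro i j
    rw [← hBH]
    exact (aux_left _ _ _ _ _).symm
  have hAE : ∀ i j, AMat β P S i j =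
      HMat β P S i j - β * ∑ k, PPas P S i k * HMat β P S k j := by
    intro i j
    exact aux_left _ _ _ _ _
  have hABE : ∀ i j, AMat β P S i j - β * ∑ k, AMat β P S i k * PAct P S k j
      = NMat β P S i j := by
    intro i j
    rw [← hAB]
    exact (aux_right _ _ _ _ _).symm
  -- zero block of `H`
  have hH0 : ∀ i j, i ∉ S → j ∈ S → HMat β P S i j = 0 := by
    intro i j hi hj
    have h := hBE i j
    have hij : i ≠ j := fun e => hi (e ▸ hj)
    simp [PAct, hi, Matrix.one_apply_ne hij] at h
    have : (1 - β) * HMat β P S i j = 0 := by linarith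
    exact (mul_eq_zero.mp this).resolve_left hβ
  have hsum : ∀ (f : N → ℝ) (j : N), j ∈ S →
      ∑ k, f k * HMat β P S k j = ∑ k : {x // x ∈ S}, f k.1 * HMat β P S k.1 j := by
    intro f j hj
    rw [Finset.sum_coe_sort S (fun k => f k * HMat β P S k j)]
    symm
    apply Finset.sum_subset (Finset.subset_univ _)
    intro k _ hk
    rw [hH0 k j hk hj, mul_zero]
  have hHS : ∀ a b : {x // x ∈ S}, HMat β P S a.1 b.1 = ((1 - β • Psub P S)⁻¹) a b := by
    have : (1 - β • Psub P S)⁻¹ = Matrix.of (fun a b : {x // x ∈ S} => HMat β P S a.1 b.1) := by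
      apply Matrix.inv_eq_right_inv
      ext a b
      have h := hBE a.1 b.1
      rw [hsum _ _ b.2] at h
      have h1 : (1 : Matrix N N ℝ) a.1 b.1 = (1 : Matrix {x // x ∈ S} {x // x ∈ S} ℝ) a b := by
        by_cases hab : a = b
        · subst hab
          rw [Matrix.one_apply_eq, Matrix.one_apply_eq]
        · rw [Matrix.one_apply_ne hab, Matrix.one_apply_ne (fun e => hab (Subtype.ext e))]
      rw [← h1, ← h, aux_left]
      simp [Psub, PAct]
    intro a b
    rw [this]
    rfl
  have hcol : ∀ i j, j ∉ S → (1 - β) * AMat β P S i j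
      = NMat β P S i j + β * ∑ k ∈ S, AMat β P S i k * P k j := by
    intro i j hj
    rw [← hABE i j, ← Finset.sum_add_sum_compl S]
    have e1 : ∑ k ∈ S, AMat β P S i k * PAct P S k j = ∑ k ∈ S, AMat β P S i k * P k j :=
      Finset.sum_congr rfl (fun k hk => by simp [PAct, hk])
    have e2 : ∑ k ∈ Sᶜ, AMat β P S i k * PAct P S k j = AMat β P S i j := by
      rw [Finset.sum_eq_single j]
      · simp [PAct, hj]
      · intro k hk hkj
        simp [PAct, Finset.mem_compl.mp hk, hkj]
      · intro h
        exact absurd (Finset.mem_compl.mpr hj) h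
    rw [e1, e2]
    ring
  have hA1 : ∀ a b : {x // x ∈ S},
      AMat β P S a.1 b.1 = (1 - β) * ((1 - β • Psub P S)⁻¹) a b := by
    intro a b
    rw [hAE, ← hHS]
    simp [PPas]
    ring
  refine ⟨hA1, ?_, ?_, ?_⟩
  · intro a j hj
    have h := hcol a.1 j hj
    have haj : a.1 ≠ j := fun e => hj (e ▸ a.2)
    have hN : NMat β P S a.1 j = 0 := by
      simp [NMat, PPas, haj, Matrix.one_apply_ne haj]
    rw [hN, zero_add, ← Finset.sum_coe_sort S (fun k => AMat β P S a.1 k * P k j)] at h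
    simp only [hA1, mul_assoc] at h
    rw [← Finset.mul_sum] at h
    apply mul_left_cancel₀ hβ
    rw [h]
    ring
  · intro i hi b
    have hib : i ≠ b.1 := fun e => hi (e ▸ b.2)
    rw [hAE, hH0 i b.1 hi b.2, hsum _ _ b.2]
    simp [PPas, hi, hHS]
  · intro i j hi hj
    have h := hcol i j hj
    have hN : NMat β P S i j = (if i = j then (1:ℝ) else 0) - β * P i j := by
      simp [NMat, PPas, hi, Matrix.one_apply]
    rw [hN] at h
    rw [← h]
    field_simp
end
end
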